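/- arXiv:2604.23021 — 6 statements merged into one kernel-verified Lean document; each statement's English description precedes it below -/
import Mathlib

section
/- Let β ≥ 4 be a real number, n ≥ 2 an integer, and m a positive integer with m = βn/log n. Throw n balls independently and uniformly at random into m bins, and let X₀ be the number of empty bins. Then E[X₀] = m(1 − 1/m)ⁿ ≤ β·n^{1−1/β}/log n. -/
/-- The number of empty bins when the `n` balls land in bins according to `ω`. -/
def emptyBins (n m : ℕ) (ω : Fin n → Fin m) : ℕ :=
  (Finset.univ.filter fun j : Fin m => ∀ i, ω i ≠ j).card

/-!
A fixed bin is avoided by `(m - 1) ^ n` of the `m ^ n` outcomes, so double counting the pairs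
(outcome, empty bin) gives the mean `m (1 - 1/m) ^ n`. It is at most `m exp (-n/m)`, and
`m = β n / log n` means `n/m = (log n)/β`, so that `exp (-n/m) = n ^ (-1/β)`.
-/

open Finset

section Counting

variable {α κ : Type*} [Fintype α] [Fintype κ] [DecidableEq α] [DecidableEq κ]

lemma card_filter_forall_ne (j : κ) :
    #{ω : α → κ | ∀ i, ω i ≠ j} = (Fintype.card κ - 1) ^ Fintype.card α := by
  have avoiding_eq_piFinset :
      ({ω : α → κ | ∀ i, ω i ≠ j} : Finset (α → κ)) = Fintype.piFinset fun _ ↦ univ.erase j := by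
    ext ω
    simp
  simp only [avoiding_eq_piFinset, Fintype.card_piFinset, prod_const, card_erase_of_mem, mem_univ,
    card_univ]

lemma sum_card_filter_forall_ne :
    ∑ ω : α → κ, #{j | ∀ i, ω i ≠ j} =
      Fintype.card κ * (Fintype.card κ - 1) ^ Fintype.card α := by
  calc ∑ ω : α → κ, #{j | ∀ i, ω i ≠ j}
      = ∑ j : κ, #{ω : α → κ | ∀ i, ω i ≠ j} :=
        sum_card_bipartiteAbove_eq_sum_card_bipartiteBelow
          (s := univ) (t := univ) fun (ω : α → κ) j ↦ ∀ i, ω i ≠ j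
    _ = Fintype.card κ * (Fintype.card κ - 1) ^ Fintype.card α := by
        simp only [card_filter_forall_ne, sum_const, card_univ, smul_eq_mul]

end Counting

lemma sum_emptyBins (n m : ℕ) : ∑ ω : Fin n → Fin m, emptyBins n m ω = m * (m - 1) ^ n := by
  simpa [emptyBins] using sum_card_filter_forall_ne (α := Fin n) (κ := Fin m)

lemma sum_emptyBins_div (K : Type*) [Field K] [CharZero K] {m : ℕ} (n : ℕ) (hm : 0 < m) :
    (∑ ω : Fin n → Fin m, (emptyBins n m ω : K)) / (m : K) ^ n = m * (1 - 1 / (m : K)) ^ n := by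
  have hm_ne : (m : K) ≠ 0 := Nat.cast_ne_zero.2 hm.ne'
  rw [← Nat.cast_sum, sum_emptyBins, Nat.cast_mul, Nat.cast_pow, Nat.cast_pred hm,
    one_sub_div hm_ne, div_pow, mul_div_assoc]

lemma one_sub_one_div_pow_le_exp_neg_div {x : ℝ} (hx : 1 ≤ x) (n : ℕ) :
    (1 - 1 / x) ^ n ≤ Real.exp (-(n / x)) := by
  have base_nonneg : 0 ≤ 1 - 1 / x := sub_nonneg.2 (div_le_one_of_le₀ hx (by positivity))
  calc (1 - 1 / x) ^ n ≤ Real.exp (-(1 / x)) ^ n :=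
        pow_le_pow_left₀ base_nonneg (Real.one_sub_le_exp_neg _) n
    _ = Real.exp (-(n / x)) := by
        rw [← Real.exp_nat_mul]
        ring_nf

lemma mul_exp_neg_div_eq_of_eq_mul_div_log {β x y : ℝ} (hy : 0 < y)
    (hxy : x = β * y / Real.log y) :
    x * Real.exp (-(y / x)) = β * y ^ (1 - 1 / β) / Real.log y := by
  have ratio : y / x = Real.log y * (1 / β) := by
    rw [hxy]
    field_simp
  have exp_eq : Real.exp (-(y / x)) = y ^ (-(1 / β)) := by
    rw [ratio, ← mul_neg, Real.rpow_def_of_pos hy]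
  rw [exp_eq, hxy, sub_eq_add_neg, Real.rpow_add hy, Real.rpow_one]
  ring

theorem stmt_0_general (β : ℝ) (n m : ℕ) (hm : 0 < m) (hmn : (m : ℝ) = β * n / Real.log n) :
    (∑ ω : Fin n → Fin m, (emptyBins n m ω : ℝ)) / (m : ℝ) ^ n
        = (m : ℝ) * (1 - 1 / (m : ℝ)) ^ n ∧
      (∑ ω : Fin n → Fin m, (emptyBins n m ω : ℝ)) / (m : ℝ) ^ n
        ≤ β * (n : ℝ) ^ ((1 : ℝ) - 1 / β) / Real.log n := by
  have hm_ne : (m : ℝ) ≠ 0 := Nat.cast_ne_zero.2 hm.ne'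
  have hn_ne : (n : ℝ) ≠ 0 := fun hn ↦ hm_ne (by rw [hmn, hn, mul_zero, zero_div])
  have hn_pos : (0 : ℝ) < n := n.cast_nonneg.lt_of_ne' hn_ne
  refine ⟨sum_emptyBins_div ℝ n hm, ?_⟩
  calc (∑ ω : Fin n → Fin m, (emptyBins n m ω : ℝ)) / (m : ℝ) ^ n
      = m * (1 - 1 / (m : ℝ)) ^ n := sum_emptyBins_div ℝ n hm
    _ ≤ m * Real.exp (-(n / m)) := by
        gcongr
        exact one_sub_one_div_pow_le_exp_neg_div (Nat.one_le_cast.2 hm) n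
    _ = β * (n : ℝ) ^ ((1 : ℝ) - 1 / β) / Real.log n :=
        mul_exp_neg_div_eq_of_eq_mul_div_log hn_pos hmn

/-- Throwing `n` balls uniformly and independently into `m` bins (with `m = β n / log n`,
`β ≥ 4`), the expected number of empty bins equals `m (1 - 1/m)^n`, which is at most
`β n^{1 - 1/β} / log n`. Expectation is the average over all `m^n` equally likely outcomes. -/
theorem stmt_0 (β : ℝ) (hβ : 4 ≤ β) (n m : ℕ) (hn : 2 ≤ n) (hm : 0 < m)
    (hmn : (m : ℝ) = β * n / Real.log n) :
    (∑ ω : Fin n → Fin m, (emptyBins n m ω : ℝ)) / (m : ℝ) ^ n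
        = (m : ℝ) * (1 - 1 / (m : ℝ)) ^ n ∧
      (∑ ω : Fin n → Fin m, (emptyBins n m ω : ℝ)) / (m : ℝ) ^ n
        ≤ β * (n : ℝ) ^ ((1 : ℝ) - 1 / β) / Real.log n :=
  stmt_0_general β n m hm hmn
end

section
/- Let n and m be positive integers. Throw n balls independently and uniformly at random into m bins, and let X₀ be the number of empty bins. Then for every λ > 0, Pr[|X₀ − E[X₀]| ≥ λ√n] ≤ 2·exp(−λ²/8). -/
/-!
The argument is McDiarmid's bounded-differences inequality. Expose the coordinates of a product
space one at a time: conditionally on the coordinates already seen, the increment of the Doob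
martingale of `f` varies within an interval whose length is the difference bound for the new
coordinate, so Hoeffding's lemma makes it sub-Gaussian, and sub-Gaussian parameters add up along the
exposure. Moving a single ball changes the number of empty bins by at most `1`, so `X₀ - E[X₀]` is
sub-Gaussian with parameter `n / 4`, and Chernoff's bound yields the constant `2` in place of `1/8`
in the exponent.
-/

open scoped Classical

/-- The expected number of empty bins: the average over all `m^n` equally likely outcomes. -/
noncomputable def expEmptyBins (n m : ℕ) : ℝ :=
  (∑ ω : Fin n → Fin m, (emptyBins n m ω : ℝ)) / (m : ℝ) ^ n

open MeasureTheory ProbabilityTheory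
open scoped NNReal

section SubGaussian

variable {α β : Type*} [MeasurableSpace α] [MeasurableSpace β] {μ : Measure α} {ν : Measure β}
  {c d : ℝ≥0}

lemma hasSubgaussianMGF_sub_integral_of_abs_sub_le [IsProbabilityMeasure μ] {g : α → ℝ}
    (hg : AEMeasurable g μ) (hc : ∀ a a', |g a - g a'| ≤ c) :
    HasSubgaussianMGF (fun a ↦ g a - ∫ a', g a' ∂μ) ((c / 2) ^ 2) μ := by
  have : Nonempty α := nonempty_of_isProbabilityMeasure μ
  have hbelow (a : α) : g a - c ∈ lowerBounds (Set.range g) := by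
    rintro _ ⟨a', rfl⟩
    linarith [(abs_le.mp (hc a a')).2]
  have hbdd : BddBelow (Set.range g) := ⟨_, hbelow (Classical.arbitrary α)⟩
  have hmem (a : α) : g a ∈ Set.Icc (⨅ a', g a') ((⨅ a', g a') + c) :=
    ⟨ciInf_le hbdd a, sub_le_iff_le_add.mp <| le_ciInf fun a' ↦ hbelow a ⟨a', rfl⟩⟩
  simpa using hasSubgaussianMGF_of_mem_Icc hg (.of_forall hmem)

lemma hasSubgaussianMGF_prod_add [SFinite μ] [SFinite ν] {X : α → ℝ} {Y : α × β → ℝ}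
    (hX : HasSubgaussianMGF X c μ) (hYm : AEStronglyMeasurable Y (μ.prod ν))
    (hY : ∀ᵐ a ∂μ, HasSubgaussianMGF (fun b ↦ Y (a, b)) d ν) :
    HasSubgaussianMGF (fun p ↦ X p.1 + Y p) (c + d) (μ.prod ν) := by
  have hsection (t : ℝ) : ∀ᵐ a ∂μ, ∫ b, Real.exp (t * (X a + Y (a, b))) ∂ν
      ≤ Real.exp (t * X a) * Real.exp (d * t ^ 2 / 2) := by
    filter_upwards [hY] with a ha
    simp only [mul_add, Real.exp_add, integral_const_mul]
    gcongr
    exact ha.mgf_le t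
  have hbound (t : ℝ) :
      Integrable (fun a ↦ Real.exp (t * X a) * Real.exp (d * t ^ 2 / 2)) μ :=
    (hX.integrable_exp_mul t).mul_const _
  have hmeas (t : ℝ) :
      AEStronglyMeasurable (fun p : α × β ↦ Real.exp (t * (X p.1 + Y p))) (μ.prod ν) :=
    Real.continuous_exp.comp_aestronglyMeasurable
      ((hX.aestronglyMeasurable.comp_fst.add hYm).const_mul t)
  have hint (t : ℝ) : Integrable (fun p : α × β ↦ Real.exp (t * (X p.1 + Y p))) (μ.prod ν) := by
    refine (integrable_prod_iff (hmeas t)).mpr ⟨?_, ?_⟩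
    · filter_upwards [hY] with a ha
      simpa only [mul_add, Real.exp_add] using (ha.integrable_exp_mul t).const_mul _
    · refine (hbound t).mono' (hmeas t).norm.integral_prod_right' ?_
      filter_upwards [hsection t] with a ha
      simp only [Real.norm_eq_abs, Real.abs_exp]
      rwa [abs_of_nonneg (by positivity)]
  refine ⟨hint, fun t ↦ ?_⟩
  calc mgf (fun p ↦ X p.1 + Y p) (μ.prod ν) t
      = ∫ a, ∫ b, Real.exp (t * (X a + Y (a, b))) ∂ν ∂μ := integral_prod _ (hint t)
    _ ≤ ∫ a, Real.exp (t * X a) * Real.exp (d * t ^ 2 / 2) ∂μ :=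
        integral_mono_ae (hint t).integral_prod_left (hbound t) (hsection t)
    _ = mgf X μ t * Real.exp (d * t ^ 2 / 2) := integral_mul_const _ _
    _ ≤ Real.exp (c * t ^ 2 / 2) * Real.exp (d * t ^ 2 / 2) := by gcongr; exact hX.mgf_le t
    _ = Real.exp (↑(c + d) * t ^ 2 / 2) := by
        rw [← Real.exp_add]
        push_cast
        ring_nf

lemma abs_integral_sub_integral_le [IsProbabilityMeasure μ] {f g : α → ℝ} {C : ℝ}
    (hf : Integrable f μ) (hg : Integrable g μ) (hC : ∀ a, |f a - g a| ≤ C) :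
    |∫ a, f a ∂μ - ∫ a, g a ∂μ| ≤ C := by
  rw [← integral_sub hf hg]
  simpa using norm_integral_le_of_norm_le_const (μ := μ) (f := fun a ↦ f a - g a) (.of_forall hC)

lemma integrable_of_hasSubgaussianMGF_sub_const [IsFiniteMeasure μ] {f : α → ℝ} {r : ℝ}
    (hf : HasSubgaussianMGF (fun a ↦ f a - r) c μ) : Integrable f μ := by
  simpa only [Pi.add_def, sub_add_cancel] using hf.integrable.add (integrable_const r)

lemma hasSubgaussianMGF_prod_sub_integral [IsProbabilityMeasure μ] [IsProbabilityMeasure ν]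
    {f : α × β → ℝ} (hf : Measurable f) (hc : ∀ a a' b, |f (a, b) - f (a', b)| ≤ c)
    (hd : ∀ a, HasSubgaussianMGF (fun b ↦ f (a, b) - ∫ b', f (a, b') ∂ν) d ν) :
    HasSubgaussianMGF (fun p ↦ f p - ∫ q, f q ∂μ.prod ν) ((c / 2) ^ 2 + d) (μ.prod ν) := by
  -- `g` is the conditional expectation of `f` given the first coordinate; `g - ∫ g` and `f - g` are
  -- the two increments of the Doob martingale.
  set g : α → ℝ := fun a ↦ ∫ b, f (a, b) ∂ν
  have hg : Measurable g := hf.stronglyMeasurable.integral_prod_right'.measurable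
  have hfa (a : α) : Integrable (fun b ↦ f (a, b)) ν :=
    integrable_of_hasSubgaussianMGF_sub_const (hd a)
  have hX : HasSubgaussianMGF (fun a ↦ g a - ∫ a', g a' ∂μ) ((c / 2) ^ 2) μ :=
    hasSubgaussianMGF_sub_integral_of_abs_sub_le hg.aemeasurable fun a a' ↦
      abs_integral_sub_integral_le (hfa a) (hfa a') (hc a a')
  have hsum : HasSubgaussianMGF (fun p ↦ f p - ∫ a, g a ∂μ) ((c / 2) ^ 2 + d) (μ.prod ν) := by
    have hYm : Measurable fun p : α × β ↦ f p - g p.1 := by fun_prop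
    simpa only [sub_add_sub_cancel'] using!
      hasSubgaussianMGF_prod_add hX hYm.aestronglyMeasurable (.of_forall hd)
  rwa [integral_prod f (integrable_of_hasSubgaussianMGF_sub_const hsum)]

lemma hasSubgaussianMGF_sub_integral_of_measurePreserving {e : α ≃ᵐ β}
    (he : MeasurePreserving e μ ν) {f : β → ℝ}
    (hf : HasSubgaussianMGF (fun a ↦ f (e a) - ∫ a', f (e a') ∂μ) c μ) :
    HasSubgaussianMGF (fun b ↦ f b - ∫ b', f b' ∂ν) c ν := by
  rw [he.integral_comp', ← he.symm.map_eq] at hf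
  simpa [Function.comp_def] using hf.of_map e.symm.measurable.aemeasurable

lemma measureReal_abs_ge_le_of_hasSubgaussianMGF {X : α → ℝ}
    (hX : HasSubgaussianMGF X c μ) {ε : ℝ} (hε : 0 ≤ ε) :
    μ.real {a | ε ≤ |X a|} ≤ 2 * Real.exp (-ε ^ 2 / (2 * c)) := by
  calc μ.real {a | ε ≤ |X a|}
      = μ.real ({a | ε ≤ X a} ∪ {a | ε ≤ (-X) a}) := by
        simp only [le_abs, Set.ofPred_or, Pi.neg_apply]
    _ ≤ μ.real {a | ε ≤ X a} + μ.real {a | ε ≤ (-X) a} := measureReal_union_le _ _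
    _ ≤ 2 * Real.exp (-ε ^ 2 / (2 * c)) := by
        rw [two_mul]
        exact add_le_add (hX.measure_ge_le hε) (hX.neg.measure_ge_le hε)

end SubGaussian

section UniformOn

variable {Ω : Type*} [Fintype Ω] [MeasurableSpace Ω] [MeasurableSingletonClass Ω]

lemma measureReal_uniformOn_univ (p : Ω → Prop) [DecidablePred p] :
    (uniformOn (Set.univ : Set Ω)).real {ω | p ω}
      = (Finset.univ.filter p).card / Fintype.card Ω := by
  rw [measureReal_def, uniformOn_univ, ← Finset.coe_filter_univ, Measure.count_apply_finset]
  simp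

lemma integral_uniformOn_univ (f : Ω → ℝ) :
    ∫ ω, f ω ∂uniformOn (Set.univ : Set Ω) = (∑ ω, f ω) / Fintype.card Ω := by
  rw [uniformOn, ProbabilityTheory.cond, integral_smul_measure]
  simp [integral_count, div_eq_inv_mul]

end UniformOn

section BoundedDifferences

/-- The bounded differences property behind McDiarmid's inequality: two points that differ at most
in the coordinate `i` have values of `f` within `c i` of each other. -/
def HasBoundedDifferences {ι : Type*} {α : ι → Type*} (f : (∀ i, α i) → ℝ) (c : ι → ℝ≥0) : Prop :=
  ∀ i x y, (∀ j ≠ i, x j = y j) → |f x - f y| ≤ c i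

lemma HasBoundedDifferences.insertNth {n : ℕ} {α : Fin (n + 1) → Type*} {f : (∀ i, α i) → ℝ}
    {c : Fin (n + 1) → ℝ≥0} (hf : HasBoundedDifferences f c) (p : Fin (n + 1)) (a : α p) :
    HasBoundedDifferences (fun x ↦ f (p.insertNth a x)) fun i ↦ c (p.succAbove i) := by
  refine fun i x y hxy ↦ hf _ _ _ ((Fin.forall_iff_succAbove p).mpr ⟨by simp, fun j hj ↦ ?_⟩)
  simpa using hxy j (ne_of_apply_ne _ hj)

lemma HasBoundedDifferences.piCongrLeft {ι κ : Type*} {α : ι → Type*} {f : (∀ i, α i) → ℝ}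
    {c : ι → ℝ≥0} (hf : HasBoundedDifferences f c) (e : κ ≃ ι) :
    HasBoundedDifferences (f ∘ Equiv.piCongrLeft α e) (c ∘ e) := by
  refine fun k x y hxy ↦ hf _ _ _ (e.forall_congr_right.mp fun j hj ↦ ?_)
  simpa only [Equiv.piCongrLeft_apply_apply] using hxy j (ne_of_apply_ne _ hj)

lemma HasBoundedDifferences.hasSubgaussianMGF_fin {n : ℕ} {α : Fin n → Type*}
    [∀ i, MeasurableSpace (α i)] {μ : ∀ i, Measure (α i)} [∀ i, IsProbabilityMeasure (μ i)]
    {f : (∀ i, α i) → ℝ} {c : Fin n → ℝ≥0} (hf : HasBoundedDifferences f c) (hfm : Measurable f) :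
    HasSubgaussianMGF (fun x ↦ f x - ∫ y, f y ∂Measure.pi μ) (∑ i, (c i / 2) ^ 2)
      (Measure.pi μ) := by
  induction n with
  | zero =>
    have hconst (x : ∀ i, α i) : f x = ∫ y, f y ∂Measure.pi μ := by
      simp [Subsingleton.elim _ x]
    rw [Fin.sum_univ_zero]
    exact .congr .fun_zero (.of_forall fun x ↦ (sub_eq_zero.mpr (hconst x)).symm)
  | succ n ih =>
    have he := (measurePreserving_piFinSuccAbove μ 0).symm
    have hfe := hfm.comp (MeasurableEquiv.piFinSuccAbove α 0).symm.measurable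
    rw [Fin.sum_univ_succAbove _ 0]
    refine hasSubgaussianMGF_sub_integral_of_measurePreserving he ?_
    refine hasSubgaussianMGF_prod_sub_integral hfe (fun a a' x ↦ hf 0 _ _ fun j hj ↦ ?_) fun a ↦
      ih (hf.insertNth 0 a) (hfe.comp measurable_prodMk_left)
    obtain ⟨k, rfl⟩ := Fin.exists_succAbove_eq hj
    change Fin.insertNth 0 a x (Fin.succAbove 0 k) = Fin.insertNth 0 a' x (Fin.succAbove 0 k)
    simp only [Fin.insertNth_apply_succAbove]

theorem HasBoundedDifferences.hasSubgaussianMGF {ι : Type*} [Fintype ι] {α : ι → Type*}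
    [∀ i, MeasurableSpace (α i)] {μ : ∀ i, Measure (α i)} [∀ i, IsProbabilityMeasure (μ i)]
    {f : (∀ i, α i) → ℝ} {c : ι → ℝ≥0} (hf : HasBoundedDifferences f c) (hfm : Measurable f) :
    HasSubgaussianMGF (fun x ↦ f x - ∫ y, f y ∂Measure.pi μ) (∑ i, (c i / 2) ^ 2)
      (Measure.pi μ) := by
  set e := (Fintype.equivFin ι).symm
  rw [← e.sum_comp]
  exact hasSubgaussianMGF_sub_integral_of_measurePreserving (measurePreserving_piCongrLeft μ e)
    ((hf.piCongrLeft e).hasSubgaussianMGF_fin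
      (hfm.comp (MeasurableEquiv.piCongrLeft α e).measurable))

/-- **McDiarmid's inequality**, two-sided form. -/
theorem HasBoundedDifferences.measureReal_abs_sub_integral_ge_le
    {ι : Type*} [Fintype ι] {α : ι → Type*}
    [∀ i, MeasurableSpace (α i)] {μ : ∀ i, Measure (α i)} [∀ i, IsProbabilityMeasure (μ i)]
    {f : (∀ i, α i) → ℝ} {c : ι → ℝ≥0} (hf : HasBoundedDifferences f c) (hfm : Measurable f)
    {ε : ℝ} (hε : 0 ≤ ε) :
    (Measure.pi μ).real {x | ε ≤ |f x - ∫ y, f y ∂Measure.pi μ|}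
      ≤ 2 * Real.exp (-2 * ε ^ 2 / ∑ i, (c i : ℝ) ^ 2) := by
  refine (measureReal_abs_ge_le_of_hasSubgaussianMGF (hf.hasSubgaussianMGF hfm) hε).trans_eq ?_
  push_cast
  simp only [div_pow, ← Finset.sum_div]
  ring_nf

theorem HasBoundedDifferences.card_abs_sub_average_ge_div_card_le {ι Ω : Type*} [Fintype ι]
    [DecidableEq ι] [Fintype Ω] [Nonempty Ω] {f : (ι → Ω) → ℝ} {c : ι → ℝ≥0}
    (hf : HasBoundedDifferences f c) {ε : ℝ} (hε : 0 ≤ ε) :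
    ((Finset.univ.filter fun ω : ι → Ω ↦ ε ≤ |f ω - (∑ η, f η) / Fintype.card (ι → Ω)|).card : ℝ)
        / Fintype.card (ι → Ω)
      ≤ 2 * Real.exp (-2 * ε ^ 2 / ∑ i, (c i : ℝ) ^ 2) := by
  let _ : MeasurableSpace Ω := ⊤
  have hpi := uniformOn_pi (ι := ι) (f := fun _ ↦ (Set.univ : Set Ω))
  rw [Set.pi_univ] at hpi
  rw [← measureReal_uniformOn_univ, ← integral_uniformOn_univ, hpi]
  exact hf.measureReal_abs_sub_integral_ge_le (measurable_of_finite f) hε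

end BoundedDifferences

lemma emptyBins_le_emptyBins_add_one {n m : ℕ} {ω η : Fin n → Fin m} {i : Fin n}
    (h : ∀ k ≠ i, ω k = η k) : emptyBins n m ω ≤ emptyBins n m η + 1 := by
  refine (Finset.card_le_card fun j hj ↦ ?_).trans (Finset.card_insert_le (η i) _)
  simp only [Finset.mem_insert, Finset.mem_filter_univ] at hj ⊢
  refine or_iff_not_imp_left.mpr fun hji k ↦ ?_
  obtain rfl | hk := eq_or_ne k i
  · exact Ne.symm hji
  · exact h k hk ▸ hj k

lemma hasBoundedDifferences_emptyBins (n m : ℕ) :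
    HasBoundedDifferences (fun ω ↦ (emptyBins n m ω : ℝ)) 1 := by
  intro i ω η h
  have hle : (emptyBins n m ω : ℝ) ≤ emptyBins n m η + 1 := by
    exact_mod_cast emptyBins_le_emptyBins_add_one h
  have hge : (emptyBins n m η : ℝ) ≤ emptyBins n m ω + 1 := by
    exact_mod_cast emptyBins_le_emptyBins_add_one fun k hk ↦ (h k hk).symm
  simpa using abs_sub_le_iff.mpr ⟨by linarith, by linarith⟩

theorem stmt_2_general (n m : ℕ) (hn : 0 < n) (hm : 0 < m) (lam : ℝ) (hl : 0 ≤ lam) :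
    ((Finset.univ.filter fun ω : Fin n → Fin m =>
          lam * Real.sqrt n ≤ |(emptyBins n m ω : ℝ) - expEmptyBins n m|).card : ℝ)
        / (m : ℝ) ^ n
      ≤ 2 * Real.exp (-2 * lam ^ 2) := by
  have : Nonempty (Fin m) := ⟨⟨0, hm⟩⟩
  have hMcDiarmid := (hasBoundedDifferences_emptyBins n m).card_abs_sub_average_ge_div_card_le
    (ε := lam * √n) (by positivity)
  have hexponent : -2 * (lam * √n) ^ 2 / ∑ i : Fin n, ((1 : Fin n → ℝ≥0) i : ℝ) ^ 2
      = -2 * lam ^ 2 := by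
    simp only [mul_pow, Real.sq_sqrt n.cast_nonneg, Pi.one_apply, NNReal.coe_one, one_pow,
      Finset.sum_const, Finset.card_univ, Fintype.card_fin, nsmul_eq_mul, mul_one]
    field_simp
  simp only [hexponent, Fintype.card_fun, Fintype.card_fin, Nat.cast_pow] at hMcDiarmid
  convert! hMcDiarmid

/-- Throwing `n` balls uniformly and independently into `m` bins, the number `X₀` of empty
bins satisfies `Pr[|X₀ - E[X₀]| ≥ λ √n] ≤ 2 exp(-λ²/8)`; probability is the fraction of the
`m^n` equally likely outcomes for which the event holds. -/
theorem stmt_2 (n m : ℕ) (hn : 0 < n) (hm : 0 < m) (lam : ℝ) (hl : 0 < lam) :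
    ((Finset.univ.filter fun ω : Fin n → Fin m =>
          lam * Real.sqrt n ≤ |(emptyBins n m ω : ℝ) - expEmptyBins n m|).card : ℝ)
        / (m : ℝ) ^ n
      ≤ 2 * Real.exp (-lam ^ 2 / 8) := by
  refine (stmt_2_general n m hn hm lam hl.le).trans ?_
  gcongr
  nlinarith
end

section
/- Let β ≥ 4 be a real number and c ≥ 8 a real number. There exists n₀ (depending on β and c) such that for every integer n ≥ n₀ and every positive integer m with m = βn/log n, if n balls are thrown independently and uniformly at random into m bins and X₀ denotes the number of empty bins, then Pr[(β/4)·n^{1−1/β}/log n ≤ X₀ ≤ 2β·n^{1−1/β}/log n] ≥ 1 − n^{−c}. -/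
open scoped Classical

/-!
Moving a ball into a bin `a` can only empty the other bins. A nondecreasing function of the number
of empty bins other than `a` is therefore largest when the balls sit in `a`, so it is negatively
correlated with the event that `a` stays empty. Adding the bins one at a time gives
`𝔼 q ^ X₀ ≤ exp ((q - 1) λ)` for all `q ≥ 0`, where `λ = m (1 - 1/m)^n` is the mean of `X₀`: its
moment generating function is at most that of a Poisson variable. Markov's inequality at `q = 2` and
`q = 1/2` makes both tails exponentially small in `λ`, which is comparable to
`μ = m exp (-n/m) = β n^{1-1/β} / log n`. For `β > 1` this is a positive power of `n` up to
logarithms, so the tails are eventually smaller than any power of `n`.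
-/

open Finset Filter Function Real

section NegativeDependence

variable {α : Type*} {n : ℕ}

lemma sum_pi_fin_succ [Fintype α] (f : (Fin (n + 1) → α) → ℝ) :
    ∑ ω, f ω = ∑ x, ∑ ω : Fin n → α, f (Fin.cons x ω) := by
  rw [← Fintype.sum_prod_type', ← (Fin.consEquiv fun _ => α).sum_comp]
  rfl

variable [DecidableEq α]

lemma pow_card_filter_insert {S : Finset α} {a : α} (ha : a ∉ S) (p : α → Prop) [DecidablePred p]
    (q : ℝ) : q ^ #{b ∈ insert a S | p b} =
      q ^ #{b ∈ S | p b} + if p a then (q - 1) * q ^ #{b ∈ S | p b} else 0 := by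
  rw [filter_insert]
  split_ifs
  · rw [card_insert_of_notMem fun h => ha (mem_of_mem_filter a h)]
    ring
  · rw [add_zero]

lemma card_filter_forall_ne_le_update {S : Finset α} {a : α} (ha : a ∉ S) (ω : Fin n → α)
    (i : Fin n) : #{b ∈ S | ∀ k, ω k ≠ b} ≤ #{b ∈ S | ∀ k, update ω i a k ≠ b} := by
  refine card_le_card fun b hb => ?_
  obtain ⟨hbS, hω⟩ := mem_filter.1 hb
  refine mem_filter.2 ⟨hbS, fun k => ?_⟩
  rw [update_apply]
  split_ifs
  · exact (ne_of_mem_of_not_mem hbS ha).symm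
  · exact hω k

variable [Fintype α]

lemma sum_ne_le_of_forall_le (a : α) (f : α → ℝ) (hf : ∀ x, f x ≤ f a) :
    ∑ x with x ≠ a, f x ≤ (1 - 1 / Fintype.card α) * ∑ x, f x := by
  have : Nonempty α := ⟨a⟩
  have hsum : (∑ x, f x) / Fintype.card α ≤ f a := by
    rw [div_le_iff₀' (by positivity)]
    simpa using sum_le_card_nsmul univ f (f a) fun x _ => hf x
  rw [filter_ne', sum_erase_eq_sub (mem_univ a), one_sub_mul, one_div_mul_eq_div]
  exact sub_le_sub_left hsum _

lemma sum_forall_ne_le_of_le_update (a : α) (f : (Fin n → α) → ℝ)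
    (hf : ∀ ω i, f ω ≤ f (update ω i a)) :
    ∑ ω with ∀ i, ω i ≠ a, f ω ≤ (1 - 1 / Fintype.card α) ^ n * ∑ ω, f ω := by
  induction n with
  | zero => simp
  | succ n ih =>
    have hp := Nat.one_sub_one_div_cast_nonneg (α := ℝ) (Fintype.card α)
    have h_tail (x : α) : ∑ ω : Fin n → α with ∀ i, ω i ≠ a, f (Fin.cons x ω) ≤
        (1 - 1 / Fintype.card α) ^ n * ∑ ω : Fin n → α, f (Fin.cons x ω) :=
      ih _ fun ω i => by simpa only [Fin.cons_update] using hf (Fin.cons x ω) i.succ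
    have h_head (x : α) :
        ∑ ω : Fin n → α, f (Fin.cons x ω) ≤ ∑ ω : Fin n → α, f (Fin.cons a ω) :=
      sum_le_sum fun ω _ => by simpa only [Fin.update_cons_zero] using hf (Fin.cons x ω) 0
    calc ∑ ω with ∀ i, ω i ≠ a, f ω
        = ∑ x with x ≠ a, ∑ ω : Fin n → α with ∀ i, ω i ≠ a, f (Fin.cons x ω) := by
          simp only [sum_filter, sum_pi_fin_succ, Fin.forall_fin_succ, Fin.cons_zero,
            Fin.cons_succ, ite_and, sum_ite_irrel, sum_const_zero]
      _ ≤ ∑ x with x ≠ a, (1 - 1 / Fintype.card α) ^ n * ∑ ω : Fin n → α, f (Fin.cons x ω) :=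
          sum_le_sum fun x _ => h_tail x
      _ ≤ (1 - 1 / Fintype.card α) ^ n *
            ((1 - 1 / Fintype.card α) * ∑ x, ∑ ω : Fin n → α, f (Fin.cons x ω)) := by
          rw [← mul_sum]
          gcongr
          exact sum_ne_le_of_forall_le a _ h_head
      _ = (1 - 1 / Fintype.card α) ^ (n + 1) * ∑ ω, f ω := by
          rw [sum_pi_fin_succ, pow_succ, mul_assoc]

-- The factor `q - 1` makes the cases `q ≤ 1` and `q ≥ 1` uniform.
lemma monotone_sub_one_mul_pow {q : ℝ} (hq : 0 ≤ q) : Monotone fun k : ℕ => (q - 1) * q ^ k :=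
  monotone_nat_of_le_succ fun k => by
    linear_combination mul_nonneg (sq_nonneg (q - 1)) (pow_nonneg hq k)

lemma sum_pow_card_filter_forall_ne_le (S : Finset α) {q : ℝ} (hq : 0 ≤ q) :
    ∑ ω : Fin n → α, q ^ #{b ∈ S | ∀ i, ω i ≠ b} ≤
      (Fintype.card α : ℝ) ^ n * exp ((q - 1) * (1 - 1 / Fintype.card α) ^ n) ^ #S := by
  set p : ℝ := (1 - 1 / Fintype.card α) ^ n
  induction S using Finset.induction_on with
  | empty => simp
  | insert a S ha ih =>
    have h_avoid : ∑ ω : Fin n → α with ∀ i, ω i ≠ a, (q - 1) * q ^ #{b ∈ S | ∀ i, ω i ≠ b} ≤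
        p * ((q - 1) * ∑ ω : Fin n → α, q ^ #{b ∈ S | ∀ i, ω i ≠ b}) := by
      rw [mul_sum univ]
      exact sum_forall_ne_le_of_le_update a _ fun ω i =>
        monotone_sub_one_mul_pow hq (card_filter_forall_ne_le_update ha ω i)
    calc ∑ ω : Fin n → α, q ^ #{b ∈ insert a S | ∀ i, ω i ≠ b}
        = ∑ ω : Fin n → α, q ^ #{b ∈ S | ∀ i, ω i ≠ b} +
          ∑ ω : Fin n → α with ∀ i, ω i ≠ a, (q - 1) * q ^ #{b ∈ S | ∀ i, ω i ≠ b} := by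
          simp only [pow_card_filter_insert ha, sum_add_distrib, sum_filter]
      _ ≤ ((q - 1) * p + 1) * ∑ ω : Fin n → α, q ^ #{b ∈ S | ∀ i, ω i ≠ b} := by
          linarith
      _ ≤ exp ((q - 1) * p) *
            ((Fintype.card α : ℝ) ^ n * exp ((q - 1) * p) ^ #S) := by
          gcongr
          exact add_one_le_exp _
      _ = (Fintype.card α : ℝ) ^ n * exp ((q - 1) * p) ^ #(insert a S) := by
          rw [card_insert_of_notMem ha, pow_succ']
          ring

end NegativeDependence

section Concentration

lemma sum_exp_mul_emptyBins_le (n m : ℕ) (s : ℝ) :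
    ∑ ω : Fin n → Fin m, exp (s * emptyBins n m ω) ≤
      (m : ℝ) ^ n * exp ((exp s - 1) * (m * (1 - 1 / m) ^ n)) := by
  calc ∑ ω : Fin n → Fin m, exp (s * emptyBins n m ω)
      = ∑ ω : Fin n → Fin m, exp s ^ #{b | ∀ i, ω i ≠ b} := by
        simp only [mul_comm s, exp_nat_mul, emptyBins]
    _ ≤ (m : ℝ) ^ n * exp ((exp s - 1) * (1 - 1 / m) ^ n) ^ m := by
        simpa only [Fintype.card_fin, card_univ] using
          sum_pow_card_filter_forall_ne_le (α := Fin m) (n := n) univ (exp_pos s).le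
    _ = (m : ℝ) ^ n * exp ((exp s - 1) * (m * (1 - 1 / m) ^ n)) := by
        rw [← exp_nat_mul, mul_left_comm]

-- The upper tail for `s > 0`, the lower tail for `s < 0`.
lemma card_mul_le_mul_emptyBins_le (n m : ℕ) (s t : ℝ) :
    (#{ω : Fin n → Fin m | s * t ≤ s * emptyBins n m ω} : ℝ) ≤
      (m : ℝ) ^ n * exp ((exp s - 1) * (m * (1 - 1 / m) ^ n) - s * t) := by
  rw [exp_sub, ← mul_div_assoc, le_div_iff₀ (exp_pos _)]
  calc (#{ω : Fin n → Fin m | s * t ≤ s * emptyBins n m ω} : ℝ) * exp (s * t)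
      ≤ ∑ ω : Fin n → Fin m with s * t ≤ s * emptyBins n m ω, exp (s * emptyBins n m ω) := by
        rw [← nsmul_eq_mul]
        exact card_nsmul_le_sum _ _ _ fun ω hω => exp_le_exp.2 (mem_filter.1 hω).2
    _ ≤ ∑ ω : Fin n → Fin m, exp (s * emptyBins n m ω) :=
        sum_le_univ_sum_of_nonneg fun ω => (exp_pos _).le
    _ ≤ _ := sum_exp_mul_emptyBins_le n m s

lemma card_two_mul_lt_emptyBins_le {n m : ℕ} {μ : ℝ} (h : m * (1 - 1 / (m : ℝ)) ^ n ≤ μ) :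
    (#{ω : Fin n → Fin m | 2 * μ < emptyBins n m ω} : ℝ) ≤ (m : ℝ) ^ n * exp (-(μ / 16)) := by
  have h_mean : 0 ≤ m * (1 - 1 / (m : ℝ)) ^ n :=
    mul_nonneg m.cast_nonneg (pow_nonneg (Nat.one_sub_one_div_cast_nonneg m) n)
  calc (#{ω : Fin n → Fin m | 2 * μ < emptyBins n m ω} : ℝ)
      ≤ #{ω : Fin n → Fin m | log 2 * (2 * μ) ≤ log 2 * emptyBins n m ω} := by
        gcongr with ω _
        intro hω
        gcongr
    _ ≤ (m : ℝ) ^ n * exp ((exp (log 2) - 1) * (m * (1 - 1 / m) ^ n) - log 2 * (2 * μ)) :=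
        card_mul_le_mul_emptyBins_le n m _ _
    _ ≤ (m : ℝ) ^ n * exp (-(μ / 16)) := by
        have h_const : 1 - 2 * log 2 ≤ -1 / 16 := by linarith [log_two_gt_d9]
        gcongr
        rw [exp_log two_pos]
        linarith [mul_le_mul_of_nonneg_left h_const (h_mean.trans h)]

lemma card_emptyBins_lt_div_four_le {n m : ℕ} {μ : ℝ} (hμ : 0 ≤ μ)
    (h : μ / 2 ≤ m * (1 - 1 / (m : ℝ)) ^ n) :
    (#{ω : Fin n → Fin m | emptyBins n m ω < μ / 4} : ℝ) ≤ (m : ℝ) ^ n * exp (-(μ / 16)) := by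
  calc (#{ω : Fin n → Fin m | emptyBins n m ω < μ / 4} : ℝ)
      ≤ #{ω : Fin n → Fin m | -log 2 * (μ / 4) ≤ -log 2 * emptyBins n m ω} := by
        gcongr with ω _
        intro hω
        simp only [neg_mul, neg_le_neg_iff]
        gcongr
    _ ≤ (m : ℝ) ^ n * exp ((exp (-log 2) - 1) * (m * (1 - 1 / m) ^ n) - -log 2 * (μ / 4)) :=
        card_mul_le_mul_emptyBins_le n m _ _
    _ ≤ (m : ℝ) ^ n * exp (-(μ / 16)) := by
        have h_const : (log 2 - 1) / 4 ≤ -1 / 16 := by linarith [log_two_lt_d9]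
        gcongr
        rw [exp_neg, exp_log two_pos]
        linarith [mul_le_mul_of_nonneg_left h_const hμ]

lemma one_sub_pow_le_exp_neg (n : ℕ) {x : ℝ} (hx : x ≤ 1) : (1 - x) ^ n ≤ exp (-(n * x)) := by
  rw [← mul_neg, exp_nat_mul]
  exact pow_le_pow_left₀ (sub_nonneg.2 hx) (one_sub_le_exp_neg x) n

lemma exp_neg_mul_one_sub_sq_le {x : ℝ} (hx : x ≤ 1) : exp (-x) * (1 - x ^ 2) ≤ 1 - x := by
  have h : exp (-x) * (1 + x) ≤ 1 := by
    rw [exp_neg, inv_mul_le_one₀ (exp_pos x), add_comm]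
    exact add_one_le_exp x
  linear_combination (1 - x) * h

lemma exp_neg_div_two_le_one_sub_pow (n : ℕ) {x : ℝ} (hx : |x| ≤ 1) (hnx : 2 * (n * x ^ 2) ≤ 1) :
    exp (-(n * x)) / 2 ≤ (1 - x) ^ n := by
  have hsq : x ^ 2 ≤ 1 := (sq_le_one_iff_abs_le_one x).2 hx
  have h_bernoulli : 1 / 2 ≤ (1 - x ^ 2) ^ n := by
    have := one_add_mul_le_pow (a := -x ^ 2) (by linarith) n
    rw [← sub_eq_add_neg] at this
    linarith
  calc exp (-(n * x)) / 2 ≤ exp (-x) ^ n * (1 - x ^ 2) ^ n := by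
        rw [← mul_neg, exp_nat_mul, div_eq_mul_one_div]
        gcongr
    _ = (exp (-x) * (1 - x ^ 2)) ^ n := (mul_pow _ _ _).symm
    _ ≤ (1 - x) ^ n :=
        pow_le_pow_left₀ (mul_nonneg (exp_pos _).le (sub_nonneg.2 hsq))
          (exp_neg_mul_one_sub_sq_le (le_of_abs_le hx)) n

lemma one_sub_le_card_emptyBins_div_of_mean_mem_Icc {n m : ℕ} {μ : ℝ} (hm : 0 < m)
    (h : m * (1 - 1 / (m : ℝ)) ^ n ∈ Set.Icc (μ / 2) μ) :
    1 - 2 * exp (-(μ / 16)) ≤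
      (#{ω : Fin n → Fin m | μ / 4 ≤ emptyBins n m ω ∧ emptyBins n m ω ≤ 2 * μ} : ℝ) / m ^ n := by
  have hμ : 0 ≤ μ := by linarith [h.1.trans h.2]
  have h_cover : (univ : Finset (Fin n → Fin m)) ⊆
      ({ω | μ / 4 ≤ emptyBins n m ω ∧ emptyBins n m ω ≤ 2 * μ} : Finset _) ∪
        (({ω | emptyBins n m ω < μ / 4} : Finset _) ∪
          ({ω | 2 * μ < emptyBins n m ω} : Finset _)) := fun ω _ => by
    simp only [mem_union, mem_filter_univ]
    grind
  have h_card := (card_le_card h_cover).trans <| (card_union_le _ _).trans <|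
    Nat.add_le_add_left (card_union_le _ _) _
  rw [card_univ, Fintype.card_fun, Fintype.card_fin, Fintype.card_fin, ← Nat.cast_le (α := ℝ)]
    at h_card
  push_cast at h_card
  rw [le_div_iff₀ (by positivity)]
  linarith [card_emptyBins_lt_div_four_le hμ h.1, card_two_mul_lt_emptyBins_le h.2]

lemma mul_one_sub_one_div_pow_mem_Icc {n m : ℕ} (hm : 0 < m) (hnm : 2 * (n : ℝ) ≤ m ^ 2) :
    m * (1 - 1 / (m : ℝ)) ^ n ∈ Set.Icc (m * exp (-(n / m)) / 2) (m * exp (-(n / m))) := by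
  have h_inv : 1 / (m : ℝ) ≤ 1 := (div_le_one (by positivity)).2 (Nat.one_le_cast.2 hm)
  rw [← mul_one_div (n : ℝ), mul_div_assoc]
  refine ⟨?_, ?_⟩ <;> gcongr
  · refine exp_neg_div_two_le_one_sub_pow n (by rwa [abs_of_nonneg (by positivity)]) ?_
    rwa [one_div_pow, mul_one_div, mul_div, div_le_one (by positivity)]
  · exact one_sub_pow_le_exp_neg n h_inv

end Concentration

section Asymptotics

lemma eventually_two_mul_le_mul_div_log_sq {β : ℝ} (hβ : β ≠ 0) :
    ∀ᶠ n : ℕ in atTop, 2 * (n : ℝ) ≤ (β * n / log n) ^ 2 := by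
  have h_log_sq := (isLittleO_pow_log_id_atTop (n := 2)).bound
    (show 0 < β ^ 2 / 2 by positivity)
  filter_upwards [tendsto_natCast_atTop_atTop.eventually h_log_sq, eventually_gt_atTop 1]
    with n h hn
  have h_log : 0 < log n := log_pos (Nat.one_lt_cast.2 hn)
  rw [norm_of_nonneg (sq_nonneg _), id, norm_of_nonneg n.cast_nonneg] at h
  rw [div_pow, le_div_iff₀ (by positivity)]
  calc 2 * n * log n ^ 2 ≤ 2 * n * (β ^ 2 / 2 * n) := by gcongr
    _ = (β * n) ^ 2 := by ring

lemma eventually_two_mul_exp_neg_le_rpow (c : ℝ) {γ δ : ℝ} (hγ : 0 < γ) (hδ : 0 < δ) :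
    ∀ᶠ n : ℕ in atTop, 2 * exp (-(δ * n ^ γ / log n)) ≤ (n : ℝ) ^ (-c) := by
  have h_log_sq := (isLittleO_log_rpow_rpow_atTop 2 hγ).bound
    (show 0 < δ / (|c| + 1) by positivity)
  filter_upwards [tendsto_natCast_atTop_atTop.eventually h_log_sq,
    (tendsto_log_atTop.comp tendsto_natCast_atTop_atTop).eventually_ge_atTop 1,
    eventually_gt_atTop 0] with n h_sq h_one hn
  replace h_one : 1 ≤ log n := h_one
  have h_exponent : (|c| + 1) * log n ≤ δ * n ^ γ / log n := by
    rw [rpow_two, norm_of_nonneg (by positivity), norm_of_nonneg (by positivity),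
      div_mul_eq_mul_div, le_div_iff₀ (by positivity)] at h_sq
    rw [le_div_iff₀ (by positivity)]
    linarith
  have h_two : 2 ≤ exp (log n) := by linarith [add_one_le_exp (log n)]
  calc 2 * exp (-(δ * n ^ γ / log n)) ≤ exp (log n) * exp (-((|c| + 1) * log n)) := by gcongr
    _ = exp (log n * -|c|) := by rw [← exp_add]; ring_nf
    _ ≤ exp (log n * -c) := by gcongr; exact le_abs_self c
    _ = (n : ℝ) ^ (-c) := (rpow_def_of_pos (by positivity) _).symm

lemma mul_div_log_mul_exp_neg {β x y : ℝ} (hβ : β ≠ 0) (hx : 1 < x) (hy : y = β * x / log x) :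
    y * exp (-(x / y)) = β * x ^ (1 - 1 / β) / log x := by
  have h_log : log x ≠ 0 := (log_pos hx).ne'
  have h_ratio : x / y = log x * (1 / β) := by rw [hy]; field_simp
  rw [h_ratio, hy, rpow_sub (by positivity), rpow_one, rpow_def_of_pos (by positivity), exp_neg]
  ring

end Asymptotics

theorem stmt_3_general (β c : ℝ) (hβ : 1 < β) :
    ∃ n₀ : ℕ, ∀ n : ℕ, n₀ ≤ n → ∀ m : ℕ,
      (m : ℝ) = β * n / log n →
      1 - (n : ℝ) ^ (-c) ≤
        ((univ.filter fun ω : Fin n → Fin m =>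
              (β / 4) * (n : ℝ) ^ ((1 : ℝ) - 1 / β) / log n ≤ (emptyBins n m ω : ℝ) ∧
              (emptyBins n m ω : ℝ) ≤ 2 * β * (n : ℝ) ^ ((1 : ℝ) - 1 / β) / log n).card : ℝ)
          / (m : ℝ) ^ n := by
  have hγ : 0 < 1 - 1 / β := by rwa [sub_pos, div_lt_one (by positivity)]
  refine eventually_atTop.1 ?_
  filter_upwards [eventually_gt_atTop 1,
    eventually_two_mul_le_mul_div_log_sq (show β ≠ 0 by positivity),
    eventually_two_mul_exp_neg_le_rpow c hγ (show 0 < β / 16 by positivity)]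
    with n hn hnm h_tail m hm
  have hn_one : (1 : ℝ) < n := Nat.one_lt_cast.2 hn
  have h_log : 0 < log n := log_pos hn_one
  have hm_pos : 0 < m := Nat.cast_pos.1 (hm ▸ by positivity : (0 : ℝ) < m)
  have h_mean := mul_one_sub_one_div_pow_mem_Icc hm_pos (hm ▸ hnm)
  rw [mul_div_log_mul_exp_neg (by positivity) hn_one hm] at h_mean
  set μ := β * (n : ℝ) ^ (1 - 1 / β) / log n with hμ
  have h_lower : β / 4 * (n : ℝ) ^ (1 - 1 / β) / log n = μ / 4 := by rw [hμ]; ring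
  have h_upper : 2 * β * (n : ℝ) ^ (1 - 1 / β) / log n = 2 * μ := by rw [hμ]; ring
  have h_exponent : β / 16 * (n : ℝ) ^ (1 - 1 / β) / log n = μ / 16 := by rw [hμ]; ring
  rw [h_exponent] at h_tail
  rw [h_lower, h_upper]
  exact (sub_le_sub_left h_tail 1).trans
    (one_sub_le_card_emptyBins_div_of_mean_mem_Icc hm_pos h_mean)

/-- For `β ≥ 4` and `c ≥ 8`, for all sufficiently large `n`, throwing `n` balls uniformly and
independently into `m = β n / log n` bins, the number `X₀` of empty bins satisfies
`(β/4) n^{1-1/β}/log n ≤ X₀ ≤ 2β n^{1-1/β}/log n` with probability at least `1 - n^{-c}`;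
probability is the fraction of the `m^n` equally likely outcomes for which the event holds. -/
theorem stmt_3 (β c : ℝ) (hβ : 4 ≤ β) (hc : 8 ≤ c) :
    ∃ n₀ : ℕ, ∀ n : ℕ, n₀ ≤ n → ∀ m : ℕ, 0 < m →
      (m : ℝ) = β * n / Real.log n →
      1 - (n : ℝ) ^ (-c) ≤
        ((Finset.univ.filter fun ω : Fin n → Fin m =>
              (β / 4) * (n : ℝ) ^ ((1 : ℝ) - 1 / β) / Real.log n ≤ (emptyBins n m ω : ℝ) ∧
              (emptyBins n m ω : ℝ) ≤ 2 * β * (n : ℝ) ^ ((1 : ℝ) - 1 / β) / Real.log n).card : ℝ)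
          / (m : ℝ) ^ n := by
  obtain ⟨n₀, h⟩ := stmt_3_general β c (by linarith)
  exact ⟨n₀, fun n hn m _ => h n hn m⟩
end

section
/- Let β ≥ 4 be a real number. There exists n₀ (depending on β) such that for every integer n ≥ n₀ and every positive integer m with m = βn/log n, if n balls are thrown independently and uniformly at random into m bins and X₁ denotes the number of bins containing exactly one ball, then E[X₁] = n(1 − 1/m)^{n−1} and n^{1−1/β}/2 ≤ E[X₁] ≤ 2·n^{1−1/β}. -/
/-!
Ball `i` is the only one in bin `j` in exactly `(m - 1) ^ (n - 1)` outcomes, since the other balls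
avoid `j` independently; summing over `i` and `j` gives the exact formula.

For the bounds put `p = 1 / m`, so that `n p = log n / β` and `n ^ (1 - 1/β) = n exp (-n p)`. Once
`p ≤ 1/2` we have `-2 p ^ 2 ≤ log (1 - p) + p ≤ 0`, so `(1 - p) ^ (n - 1)` differs from
`exp (-(n - 1) p)` by a factor between `exp (-2 n p ^ 2)` and `1`. It tends to `1` because
`n p ^ 2 = (log n / β) ^ 2 / n → 0`, so `E[X₁]` is asymptotically equivalent to `n ^ (1 - 1/β)`,
which gives the bounds with any constants `c < 1 < C`.
-/

/-- The number of bins containing exactly one ball, when the `n` balls land according to `ω`. -/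
def singletonBins (n m : ℕ) (ω : Fin n → Fin m) : ℕ :=
  (Finset.univ.filter fun j : Fin m =>
    (Finset.univ.filter fun i : Fin n => ω i = j).card = 1).card

section Counting

open Finset

variable {ι κ : Type*} [Fintype ι] [DecidableEq ι] [Fintype κ] [DecidableEq κ]

lemma card_filter_eq_singleton (s : Finset ι) :
    #{i | s = {i}} = if #s = 1 then 1 else 0 := by
  split_ifs with hs
  · obtain ⟨a, rfl⟩ := card_eq_one.1 hs
    simp [filter_eq]
  · refine card_eq_zero.2 (filter_eq_empty_iff.2 fun i _ hi => hs ?_)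
    rw [hi, card_singleton]

lemma card_filter_fiber_eq_singleton (i : ι) (j : κ) :
    #{ω : ι → κ | ({k | ω k = j} : Finset ι) = {i}} =
      (Fintype.card κ - 1) ^ (Fintype.card ι - 1) := by
  have product_set : ({ω : ι → κ | ({k | ω k = j} : Finset ι) = {i}} : Finset (ι → κ)) =
      Fintype.piFinset fun k => if k = i then {j} else {j}ᶜ := by
    ext ω
    simp only [mem_filter_univ, Fintype.mem_piFinset, Finset.ext_iff, mem_singleton]
    refine forall_congr' fun k => ?_
    by_cases hk : k = i <;> simp [hk]
  have card_factor : ∀ k ∈ ({i}ᶜ : Finset ι),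
      #(if k = i then {j} else {j}ᶜ : Finset κ) = Fintype.card κ - 1 := by
    intro k hk
    rw [if_neg (by simpa using hk), card_compl, card_singleton]
  rw [product_set, Fintype.card_piFinset, Fintype.prod_eq_mul_prod_compl i,
    prod_eq_pow_card card_factor, if_pos rfl, card_singleton, one_mul, card_compl, card_singleton]

lemma sum_card_filter_card_fiber_eq_one :
    ∑ ω : ι → κ, #{j | #{i | ω i = j} = 1} =
      Fintype.card ι * Fintype.card κ * (Fintype.card κ - 1) ^ (Fintype.card ι - 1) := by
  calc ∑ ω : ι → κ, #{j | #{i | ω i = j} = 1}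
      = ∑ ω : ι → κ, ∑ j, #{i | ({k | ω k = j} : Finset ι) = {i}} := by
        refine sum_congr rfl fun ω _ => ?_
        simp_rw [card_filter_eq_singleton]
        exact card_filter _ _
    _ = ∑ j : κ, ∑ i : ι, #{ω : ι → κ | ({k | ω k = j} : Finset ι) = {i}} := by
        rw [sum_comm]
        exact sum_congr rfl fun j _ => sum_card_bipartiteAbove_eq_sum_card_bipartiteBelow
          fun (ω : ι → κ) i => ({k | ω k = j} : Finset ι) = {i}
    _ = Fintype.card ι * Fintype.card κ * (Fintype.card κ - 1) ^ (Fintype.card ι - 1) := by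
        simp only [card_filter_fiber_eq_singleton, sum_const, card_univ, smul_eq_mul]
        ring

lemma sum_singletonBins_div_pow (n : ℕ) {m : ℕ} (hm : 0 < m) :
    (∑ ω : Fin n → Fin m, (singletonBins n m ω : ℝ)) / (m : ℝ) ^ n =
      n * (1 - 1 / (m : ℝ)) ^ (n - 1) := by
  have total : ∑ ω : Fin n → Fin m, singletonBins n m ω = n * m * (m - 1) ^ (n - 1) := by
    simpa only [Fintype.card_fin, singletonBins] using
      sum_card_filter_card_fiber_eq_one (ι := Fin n) (κ := Fin m)
  have hm' : (m : ℝ) ≠ 0 := by positivity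
  rw [← Nat.cast_sum, total, one_sub_div hm', div_pow]
  push_cast [Nat.cast_sub (Nat.one_le_of_lt hm)]
  cases n with
  | zero => simp
  | succ n =>
    rw [Nat.add_sub_cancel, pow_succ]
    field_simp

end Counting

section Asymptotics

open Filter Real Topology

lemma one_sub_mul_exp_le_one (p : ℝ) : (1 - p) * exp p ≤ 1 :=
  calc (1 - p) * exp p ≤ exp (-p) * exp p := by gcongr; exact one_sub_le_exp_neg p
    _ = 1 := by rw [← exp_add, neg_add_cancel, exp_zero]

lemma exp_neg_two_mul_sq_le_one_sub_mul_exp {p : ℝ} (hp : p ≤ 1 / 2) :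
    exp (-(2 * p ^ 2)) ≤ (1 - p) * exp p := by
  have hp' : 0 < 1 - p := by linarith
  have log_lower_bound : -(2 * p ^ 2) - p ≤ log (1 - p) :=
    calc -(2 * p ^ 2) - p ≤ 1 - (1 - p)⁻¹ := by
          rw [← sub_nonneg]
          have : 1 - (1 - p)⁻¹ - (-(2 * p ^ 2) - p) = p ^ 2 * (1 - 2 * p) / (1 - p) := by
            field_simp
            ring
          rw [this]
          exact div_nonneg (mul_nonneg (sq_nonneg p) (by linarith)) hp'.le
      _ ≤ log (1 - p) := one_sub_inv_le_log_of_pos hp'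
  calc exp (-(2 * p ^ 2)) = exp (-(2 * p ^ 2) - p) * exp p := by
        rw [← exp_add, sub_add_cancel]
    _ ≤ (1 - p) * exp p := by gcongr; exact (le_log_iff_exp_le hp').1 log_lower_bound

lemma tendsto_one_sub_pow_mul_exp {α : Type*} {l : Filter α} {p : α → ℝ} {k : α → ℕ}
    (hp : Tendsto p l (𝓝 0)) (hkp : Tendsto (fun a => k a * p a ^ 2) l (𝓝 0)) :
    Tendsto (fun a => (1 - p a) ^ k a * exp (k a * p a)) l (𝓝 1) := by
  have lower_tendsto : Tendsto (fun a => exp (-(2 * (k a * p a ^ 2)))) l (𝓝 1) := by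
    simpa using ((hkp.const_mul 2).neg).rexp
  have p_le_half : ∀ᶠ a in l, p a ≤ 1 / 2 := hp.eventually_le_const (by norm_num)
  have as_pow (a : α) : (1 - p a) ^ k a * exp (k a * p a) = ((1 - p a) * exp (p a)) ^ k a := by
    rw [mul_pow, exp_nat_mul]
  refine tendsto_of_tendsto_of_tendsto_of_le_of_le' lower_tendsto tendsto_const_nhds ?_ ?_
  · filter_upwards [p_le_half] with a ha
    calc exp (-(2 * (k a * p a ^ 2))) = exp (-(2 * p a ^ 2)) ^ k a := by
          rw [← exp_nat_mul]
          ring_nf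
      _ ≤ ((1 - p a) * exp (p a)) ^ k a := by
          gcongr
          exact exp_neg_two_mul_sq_le_one_sub_mul_exp ha
      _ = (1 - p a) ^ k a * exp (k a * p a) := (as_pow a).symm
  · filter_upwards [p_le_half] with a ha
    rw [as_pow]
    exact pow_le_one₀ (mul_nonneg (by linarith) (exp_pos _).le) (one_sub_mul_exp_le_one _)

lemma tendsto_log_pow_div_natCast (k : ℕ) :
    Tendsto (fun n : ℕ => log n ^ k / n) atTop (𝓝 0) :=
  (isLittleO_pow_log_id_atTop.comp_tendsto tendsto_natCast_atTop_atTop).tendsto_div_nhds_zero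

lemma rpow_one_sub_eq_mul_exp {x : ℝ} (hx : 0 < x) (a : ℝ) :
    x ^ (1 - a) = x * exp (-(x * (a * (log x / x)))) := by
  have : x * (a * (log x / x)) = log x * a := by field_simp
  rw [sub_eq_add_neg, rpow_add hx, rpow_one, rpow_def_of_pos hx, this, mul_neg]

lemma tendsto_mul_one_sub_mul_log_div_pow_div_rpow (a : ℝ) :
    Tendsto (fun n : ℕ => n * (1 - a * (log n / n)) ^ (n - 1) / (n : ℝ) ^ (1 - a)) atTop (𝓝 1) := by
  set p : ℕ → ℝ := fun n => a * (log n / n) with p_def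
  have p_tendsto : Tendsto p atTop (𝓝 0) := by
    simpa using (tendsto_log_pow_div_natCast 1).const_mul a
  have mul_sq_tendsto : Tendsto (fun n => ((n - 1 : ℕ) : ℝ) * p n ^ 2) atTop (𝓝 0) := by
    have bound_tendsto : Tendsto (fun n : ℕ => a ^ 2 * (log n ^ 2 / n)) atTop (𝓝 0) := by
      simpa using (tendsto_log_pow_div_natCast 2).const_mul (a ^ 2)
    refine squeeze_zero' (.of_forall fun n => by positivity) ?_ bound_tendsto
    filter_upwards [eventually_gt_atTop 0] with n hn
    calc ((n - 1 : ℕ) : ℝ) * p n ^ 2 ≤ n * p n ^ 2 := by gcongr; exact n.sub_le 1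
      _ = a ^ 2 * (log n ^ 2 / n) := by
          rw [p_def]
          field_simp
  have product_tendsto : Tendsto
      (fun n => (1 - p n) ^ (n - 1) * exp ((n - 1 : ℕ) * p n) * exp (p n)) atTop (𝓝 1) := by
    simpa using (tendsto_one_sub_pow_mul_exp p_tendsto mul_sq_tendsto).mul p_tendsto.rexp
  refine product_tendsto.congr' ?_
  filter_upwards [eventually_gt_atTop 0] with n hn
  have hn' : (0 : ℝ) < n := Nat.cast_pos.2 hn
  have exp_mul_exp : exp ((n - 1 : ℕ) * p n) * exp (p n) = exp (n * p n) := by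
    rw [← exp_add, Nat.cast_pred hn]
    ring_nf
  change _ = n * (1 - p n) ^ (n - 1) / (n : ℝ) ^ (1 - a)
  rw [rpow_one_sub_eq_mul_exp hn', mul_div_mul_left _ _ hn'.ne', exp_neg, div_inv_eq_mul,
    mul_assoc, exp_mul_exp]

end Asymptotics

theorem stmt_4_general (β : ℝ) {c C : ℝ} (hc : c < 1) (hC : 1 < C) :
    ∃ n₀ : ℕ, ∀ n : ℕ, n₀ ≤ n → ∀ m : ℕ, 0 < m →
      (m : ℝ) = β * n / Real.log n →
      (∑ ω : Fin n → Fin m, (singletonBins n m ω : ℝ)) / (m : ℝ) ^ n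
          = (n : ℝ) * (1 - 1 / (m : ℝ)) ^ (n - 1) ∧
        c * (n : ℝ) ^ ((1 : ℝ) - 1 / β)
          ≤ (∑ ω : Fin n → Fin m, (singletonBins n m ω : ℝ)) / (m : ℝ) ^ n ∧
        (∑ ω : Fin n → Fin m, (singletonBins n m ω : ℝ)) / (m : ℝ) ^ n
          ≤ C * (n : ℝ) ^ ((1 : ℝ) - 1 / β) := by
  have ratio_tendsto := tendsto_mul_one_sub_mul_log_div_pow_div_rpow (1 / β)
  obtain ⟨n₀, ratio_bounds⟩ := Filter.eventually_atTop.1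
    ((ratio_tendsto.eventually_const_le hc).and (ratio_tendsto.eventually_le_const hC))
  refine ⟨max n₀ 1, fun n hn m hm hmβ => ?_⟩
  have rpow_pos : 0 < (n : ℝ) ^ (1 - 1 / β) :=
    Real.rpow_pos_of_pos (Nat.cast_pos.2 (le_of_max_le_right hn)) _
  have one_div_m : 1 / (m : ℝ) = 1 / β * (Real.log n / n) := by
    rw [hmβ, one_div_div, div_mul_div_comm, one_mul]
  obtain ⟨lower, upper⟩ := ratio_bounds n (le_of_max_le_left hn)
  rw [← one_div_m] at lower upper
  rw [sum_singletonBins_div_pow n hm]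
  exact ⟨rfl, (le_div_iff₀ rpow_pos).1 lower, (div_le_iff₀ rpow_pos).1 upper⟩

/-- For `β ≥ 4`, for all sufficiently large `n`, throwing `n` balls uniformly and independently
into `m = β n / log n` bins, the expected number of bins with exactly one ball equals
`n (1 - 1/m)^{n-1}` and lies between `n^{1-1/β}/2` and `2 n^{1-1/β}`. Expectation is the
average over all `m^n` equally likely outcomes. -/
theorem stmt_4 (β : ℝ) (hβ : 4 ≤ β) :
    ∃ n₀ : ℕ, ∀ n : ℕ, n₀ ≤ n → ∀ m : ℕ, 0 < m →
      (m : ℝ) = β * n / Real.log n →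
      (∑ ω : Fin n → Fin m, (singletonBins n m ω : ℝ)) / (m : ℝ) ^ n
          = (n : ℝ) * (1 - 1 / (m : ℝ)) ^ (n - 1) ∧
        (n : ℝ) ^ ((1 : ℝ) - 1 / β) / 2
          ≤ (∑ ω : Fin n → Fin m, (singletonBins n m ω : ℝ)) / (m : ℝ) ^ n ∧
        (∑ ω : Fin n → Fin m, (singletonBins n m ω : ℝ)) / (m : ℝ) ^ n
          ≤ 2 * (n : ℝ) ^ ((1 : ℝ) - 1 / β) := by
  simpa only [div_eq_inv_mul] using stmt_4_general β (by norm_num : (2 : ℝ)⁻¹ < 1) one_lt_two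
end

section
/- Let c > 1 be a real constant. There exists n₀ (depending on c) such that for every integer n ≥ n₀ the following holds. Let P = {p₁,…,pₙ} be n points chosen independently and uniformly at random from the flat unit torus T², and let A = max over p ∈ P of μ(Vor(p,P)) be the area of the largest cell in the Voronoi diagram of P. Then Pr[A ≥ 4c·(log n)/n] ≤ n^{4−2c}. -/
open MeasureTheory

instance : Fact ((0 : ℝ) < 1) := ⟨one_pos⟩

/-- The flat unit torus `T² = (ℝ/ℤ)²`. -/
abbrev T2 : Type := AddCircle (1 : ℝ) × AddCircle (1 : ℝ)

/-- The torus distance on `T²`: the Euclidean combination of the quotient distances on the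
two coordinates. -/
noncomputable def dT (p q : T2) : ℝ :=
  Real.sqrt (dist p.1 q.1 ^ 2 + dist p.2 q.2 ^ 2)

/-- The Voronoi cell of `p` with respect to the site set `P`, in the torus metric. -/
def vor (p : T2) (P : Set T2) : Set T2 :=
  {x | ∀ q ∈ P, dT x p ≤ dT x q}

/-!
The distance `dist` on `T2` is the sup of the two circle distances, and `dist ≤ dT ≤ √2 * dist`. The
sup ball of radius `√2 * r` has area at most `8 * r ^ 2`, so a Voronoi cell of larger area contains
a point `x` further than `√2 * r` from its site. No site is `dT`-closer to `x`, hence the sup ball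
of radius `r` about `x` contains no site at all.

Such an `x` is within `1 / (2 * n)` of a point of the `n × n` grid, so a slightly smaller ball about
that grid point contains no site. When all cells of area at least `a` are to be excluded, one takes
`8 * r ^ 2` close to `a`; the smaller ball then has area at least `a / 2 - 3 / n`, so it is empty
with probability at most `exp (3 - n * a / 2)`, and there are `n ^ 2` grid points.
-/

section EmptyBalls

variable {X ι : Type*} [MeasurableSpace X] [Fintype ι] {μ : Measure X} [IsProbabilityMeasure μ]

lemma pi_real_forall_notMem_le_exp {s : Set X} (hs : MeasurableSet s) :
    (Measure.pi fun _ : ι => μ).real {ω | ∀ j, ω j ∉ s} ≤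
      Real.exp (-(Fintype.card ι * μ.real s)) := by
  have h_pi : {ω : ι → X | ∀ j, ω j ∉ s} = Set.univ.pi fun _ => sᶜ := by
    ext ω
    simp [Set.mem_pi]
  calc (Measure.pi fun _ : ι => μ).real {ω | ∀ j, ω j ∉ s}
      = (1 - μ.real s) ^ Fintype.card ι := by
        rw [h_pi, measureReal_def, Measure.pi_pi, Finset.prod_const, Finset.card_univ,
          ENNReal.toReal_pow, ← measureReal_def, probReal_compl_eq_one_sub hs]
    _ ≤ Real.exp (-μ.real s) ^ Fintype.card ι :=
        pow_le_pow_left₀ (sub_nonneg.2 measureReal_le_one) (Real.one_sub_le_exp_neg _) _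
    _ = Real.exp (-(Fintype.card ι * μ.real s)) := by rw [← Real.exp_nat_mul, mul_neg]

lemma pi_real_exists_closedBall_empty_le [PseudoMetricSpace X] [OpensMeasurableSpace X]
    {κ : Type*} [Fintype κ] {g : κ → X} {ε r m : ℝ} (hg : ∀ x, ∃ k, dist x (g k) ≤ ε)
    (hm : ∀ k, m ≤ μ.real (Metric.closedBall (g k) (r - ε))) :
    (Measure.pi fun _ : ι => μ).real {ω | ∃ x, ∀ j, ω j ∉ Metric.closedBall x r} ≤
      Fintype.card κ * Real.exp (-(Fintype.card ι * m)) := by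
  have h_cover : {ω : ι → X | ∃ x, ∀ j, ω j ∉ Metric.closedBall x r} ⊆
      ⋃ k, {ω | ∀ j, ω j ∉ Metric.closedBall (g k) (r - ε)} := by
    rintro ω ⟨x, hx⟩
    obtain ⟨k, hk⟩ := hg x
    refine Set.mem_iUnion.2 ⟨k, fun j hj => hx j (Metric.closedBall_subset_closedBall' ?_ hj)⟩
    rw [dist_comm]
    linarith
  calc _ ≤ _ := measureReal_mono h_cover
    _ ≤ ∑ k, _ := measureReal_iUnion_fintype_le _
    _ ≤ ∑ _k : κ, Real.exp (-(Fintype.card ι * m)) := by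
        gcongr with k
        refine (pi_real_forall_notMem_le_exp Metric.isClosed_closedBall.measurableSet).trans ?_
        gcongr
        exact hm k
    _ = Fintype.card κ * Real.exp (-(Fintype.card ι * m)) := by
        rw [Finset.sum_const, Finset.card_univ, nsmul_eq_mul]

end EmptyBalls

instance : IsProbabilityMeasure (volume : Measure (AddCircle (1 : ℝ))) :=
  ⟨UnitAddCircle.measure_univ⟩

lemma dist_le_dT (x y : T2) : dist x y ≤ dT x y :=
  max_le (Real.le_sqrt_of_sq_le (le_add_of_nonneg_right (sq_nonneg _)))
    (Real.le_sqrt_of_sq_le (le_add_of_nonneg_left (sq_nonneg _)))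

lemma dT_le_sqrt_two_mul_dist (x y : T2) : dT x y ≤ √2 * dist x y := by
  have h_fst : dist x.1 y.1 ^ 2 ≤ dist x y ^ 2 := by gcongr; exact le_max_left _ _
  have h_snd : dist x.2 y.2 ^ 2 ≤ dist x y ^ 2 := by gcongr; exact le_max_right _ _
  rw [dT, Real.sqrt_le_left (by positivity), mul_pow, Real.sq_sqrt zero_le_two]
  linarith

lemma volume_closedBall_T2 (x : T2) (r : ℝ) :
    volume (Metric.closedBall x r) = ENNReal.ofReal (min 1 (2 * r)) ^ 2 := by
  rw [← Prod.mk.eta (p := x), ← closedBall_prod_same, Measure.volume_eq_prod, Measure.prod_prod,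
    AddCircle.volume_closedBall, AddCircle.volume_closedBall, sq]

lemma volume_closedBall_T2_lt {r s : ℝ} (hs : 0 < s) (hrs : r < s) (x : T2) :
    volume (Metric.closedBall x r) < ENNReal.ofReal (4 * s ^ 2) := by
  calc volume (Metric.closedBall x r)
      ≤ ENNReal.ofReal (2 * r) ^ 2 := by
        rw [volume_closedBall_T2]
        gcongr
        exact min_le_right _ _
    _ < ENNReal.ofReal (2 * s) ^ 2 := by
        have h_lt : ENNReal.ofReal (2 * r) < ENNReal.ofReal (2 * s) :=
          (ENNReal.ofReal_lt_ofReal_iff (by positivity)).2 (by linarith)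
        gcongr
    _ = ENNReal.ofReal (4 * s ^ 2) := by
        rw [← ENNReal.ofReal_pow (by positivity)]
        ring_nf

lemma le_volume_real_closedBall_T2 {r δ : ℝ} (hr₀ : 0 ≤ r) (hr : r ≤ 1 / 2) (hδ : 0 ≤ δ) (x : T2) :
    4 * r ^ 2 - 8 * r * δ ≤ volume.real (Metric.closedBall x (r - δ)) := by
  rcases le_total r δ with h_le | h_le
  · have : r * r ≤ r * δ := by gcongr
    exact le_trans (by nlinarith) measureReal_nonneg
  · rw [measureReal_def, volume_closedBall_T2, min_eq_right (by linarith), ENNReal.toReal_pow,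
      ENNReal.toReal_ofReal (by linarith)]
    nlinarith [sq_nonneg δ]

lemma exists_dist_toAddCircle_le (n : ℕ) [NeZero n] (x : UnitAddCircle) :
    ∃ k : ZMod n, dist x (ZMod.toAddCircle k) ≤ 1 / (2 * n) := by
  induction x using QuotientAddGroup.induction_on with | H y
  have hn : (0 : ℝ) < n := Nat.cast_pos.2 (NeZero.pos n)
  refine ⟨(round (y * n) : ℤ), ?_⟩
  calc dist (y : UnitAddCircle) (ZMod.toAddCircle ((round (y * n) : ℤ) : ZMod n))
      = ‖((y - round (y * n) / n : ℝ) : UnitAddCircle)‖ := by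
        rw [ZMod.toAddCircle_intCast, dist_eq_norm, ← AddCircle.coe_sub]
    _ ≤ |y - round (y * n) / n| := QuotientAddGroup.norm_mk_le_norm
    _ = |y * n - round (y * n)| / n := by
        rw [← abs_of_pos hn, ← abs_div, abs_of_pos hn]
        congr 1
        field_simp
    _ ≤ 1 / 2 / n := by gcongr; exact abs_sub_round _
    _ = 1 / (2 * n) := by rw [div_div]

lemma exists_dist_prodMap_toAddCircle_le (n : ℕ) [NeZero n] (x : T2) :
    ∃ k : ZMod n × ZMod n,
      dist x (Prod.map ZMod.toAddCircle ZMod.toAddCircle k : T2) ≤ 1 / (2 * n) := by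
  obtain ⟨i, hi⟩ := exists_dist_toAddCircle_le n x.1
  obtain ⟨j, hj⟩ := exists_dist_toAddCircle_le n x.2
  exact ⟨(i, j), max_le hi hj⟩

lemma exists_forall_lt_dist_of_volume_lt_volume_vor {p : T2} {P : Set T2} {r : ℝ}
    (h : volume (Metric.closedBall p (√2 * r)) < volume (vor p P)) :
    ∃ x, ∀ q ∈ P, r < dist x q := by
  obtain ⟨x, hx_vor, hx_far⟩ := Set.not_subset.1 fun h_sub => (measure_mono h_sub).not_gt h
  refine ⟨x, fun q hq => lt_of_mul_lt_mul_left ?_ (Real.sqrt_nonneg 2)⟩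
  calc √2 * r < dist x p := not_le.1 hx_far
    _ ≤ dT x p := dist_le_dT x p
    _ ≤ dT x q := hx_vor q hq
    _ ≤ √2 * dist x q := dT_le_sqrt_two_mul_dist x q

/-- The area `A` of the largest cell in the Voronoi diagram of the sites `ω j`, as an extended
nonnegative real. -/
noncomputable def largestCellArea {ι : Type*} (ω : ι → T2) : ENNReal :=
  ⨆ i, volume (vor (ω i) (Set.range ω))

lemma largestCellArea_le_one {ι : Type*} (ω : ι → T2) : largestCellArea ω ≤ 1 :=
  iSup_le fun _ => prob_le_one

lemma exists_closedBall_empty_of_le_largestCellArea {ι : Type*} {ω : ι → T2} {r s : ℝ}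
    (hs : 0 < s) (hrs : r < s) (h : ENNReal.ofReal (8 * s ^ 2) ≤ largestCellArea ω) :
    ∃ x, ∀ j, ω j ∉ Metric.closedBall x r := by
  have h_rs : √2 * r < √2 * s := by gcongr
  have h_area : 8 * s ^ 2 = 4 * (√2 * s) ^ 2 := by
    rw [mul_pow, Real.sq_sqrt zero_le_two]
    ring
  rw [h_area] at h
  obtain ⟨i, hi⟩ := lt_iSup_iff.1 ((volume_closedBall_T2_lt (by positivity) h_rs 0).trans_le h)
  rw [volume_closedBall_T2, ← volume_closedBall_T2 (ω i)] at hi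
  obtain ⟨x, hx⟩ := exists_forall_lt_dist_of_volume_lt_volume_vor hi
  refine ⟨x, fun j hj => (hx (ω j) ⟨j, rfl⟩).not_ge ?_⟩
  rwa [dist_comm]

lemma pi_real_eight_mul_sq_le_largestCellArea_le (n : ℕ) [NeZero n] {s : ℝ} (hs₀ : 0 < s)
    (hs : s ≤ 1 / 2) :
    (Measure.pi fun _ : Fin n => (volume : Measure T2)).real
        {ω | ENNReal.ofReal (8 * s ^ 2) ≤ largestCellArea ω} ≤
      n ^ 2 * Real.exp (8 * s - 4 * n * s ^ 2) := by
  have hn : (0 : ℝ) < n := Nat.cast_pos.2 (NeZero.pos n)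
  have h_lt : s - 1 / (2 * n) < s := sub_lt_self _ (by positivity)
  have h_area (k : ZMod n × ZMod n) : 4 * s ^ 2 - 8 * s * (1 / n) ≤
      volume.real (Metric.closedBall (Prod.map ZMod.toAddCircle ZMod.toAddCircle k : T2)
        (s - 1 / (2 * n) - 1 / (2 * n))) := by
    convert le_volume_real_closedBall_T2 hs₀.le hs (one_div_nonneg.2 hn.le) _ using 3
    ring
  calc _ ≤ (Measure.pi fun _ : Fin n => (volume : Measure T2)).real
          {ω | ∃ x, ∀ j, ω j ∉ Metric.closedBall x (s - 1 / (2 * n))} :=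
        measureReal_mono fun ω => exists_closedBall_empty_of_le_largestCellArea hs₀ h_lt
    _ ≤ Fintype.card (ZMod n × ZMod n) *
          Real.exp (-(Fintype.card (Fin n) * (4 * s ^ 2 - 8 * s * (1 / n)))) :=
        pi_real_exists_closedBall_empty_le (exists_dist_prodMap_toAddCircle_le n) h_area
    _ = n ^ 2 * Real.exp (8 * s - 4 * n * s ^ 2) := by
        rw [Fintype.card_prod, ZMod.card, Fintype.card_fin, Nat.cast_mul, ← sq]
        congr 2
        field_simp
        ring

theorem pi_real_le_largestCellArea_le (n : ℕ) [NeZero n] (a : ℝ) :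
    (Measure.pi fun _ : Fin n => (volume : Measure T2)).real
        {ω | ENNReal.ofReal a ≤ largestCellArea ω} ≤
      n ^ 2 * Real.exp (3 - n * a / 2) := by
  have hn : (1 : ℝ) ≤ n := Nat.one_le_cast.2 (NeZero.pos n)
  rcases le_or_gt a 0 with ha₀ | ha₀
  · have h_exp : 0 ≤ 3 - n * a / 2 := by nlinarith
    exact measureReal_le_one.trans
      (one_le_mul_of_one_le_of_one_le (one_le_pow₀ hn) (Real.one_le_exp h_exp))
  rcases lt_or_ge 1 a with ha₁ | ha₁
  · have h_empty : {ω : Fin n → T2 | ENNReal.ofReal a ≤ largestCellArea ω} = ∅ :=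
      Set.eq_empty_of_forall_notMem fun ω hω =>
        ((largestCellArea_le_one ω).trans_lt (ENNReal.one_lt_ofReal.2 ha₁)).not_ge hω
    rw [h_empty, measureReal_empty]
    positivity
  obtain ⟨s, hs₀, rfl⟩ : ∃ s : ℝ, 0 < s ∧ 8 * s ^ 2 = a :=
    ⟨√(a / 8), Real.sqrt_pos.2 (by positivity), by rw [Real.sq_sqrt (by positivity)]; ring⟩
  have hs : s ≤ 3 / 8 := by nlinarith
  have h_exponent : 8 * s - 4 * n * s ^ 2 ≤ 3 - n * (8 * s ^ 2) / 2 := by linarith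
  calc _ ≤ (n : ℝ) ^ 2 * Real.exp (8 * s - 4 * n * s ^ 2) :=
        pi_real_eight_mul_sq_le_largestCellArea_le n hs₀ (by linarith)
    _ ≤ (n : ℝ) ^ 2 * Real.exp (3 - n * (8 * s ^ 2) / 2) := by gcongr

theorem stmt_9_general (c : ℝ) {n : ℕ} (hn : 5 ≤ n) :
    (Measure.pi fun _ : Fin n => (volume : Measure T2))
        {ω | ENNReal.ofReal (4 * c * Real.log n / n) ≤ largestCellArea ω} ≤
      ENNReal.ofReal ((n : ℝ) ^ ((4 : ℝ) - 2 * c)) := by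
  have : NeZero n := ⟨by lia⟩
  have hn' : (5 : ℝ) ≤ n := by exact_mod_cast hn
  have hn₀ : (0 : ℝ) < n := by linarith
  have h_exp_three : Real.exp 3 ≤ (n : ℝ) ^ 2 := by
    calc Real.exp 3 = Real.exp 1 ^ 3 := by rw [← Real.exp_nat_mul]; norm_num
      _ ≤ 2.7182818286 ^ 3 := by gcongr; exact Real.exp_one_lt_d9.le
      _ ≤ (5 : ℝ) ^ 2 := by norm_num
      _ ≤ (n : ℝ) ^ 2 := by gcongr
  refine (ENNReal.le_ofReal_iff_toReal_le (measure_ne_top _ _) (by positivity)).2 ?_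
  have h_exponent : 3 - n * (4 * c * Real.log n / n) / 2 = 3 + Real.log n * -(2 * c) := by
    field_simp
    ring
  calc _ ≤ (n : ℝ) ^ 2 * Real.exp (3 - n * (4 * c * Real.log n / n) / 2) :=
        pi_real_le_largestCellArea_le n _
    _ = (n : ℝ) ^ 2 * Real.exp 3 * (n : ℝ) ^ (-(2 * c)) := by
        rw [h_exponent, Real.exp_add, Real.rpow_def_of_pos hn₀, mul_assoc]
    _ ≤ (n : ℝ) ^ 2 * (n : ℝ) ^ 2 * (n : ℝ) ^ (-(2 * c)) := by gcongr
    _ = (n : ℝ) ^ ((4 : ℝ) - 2 * c) := by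
        rw [← pow_add, sub_eq_add_neg, Real.rpow_add hn₀]
        norm_cast

/-- For `c > 1` and all sufficiently large `n`: if `n` points are chosen independently and
uniformly from the flat unit torus, the probability that the largest Voronoi cell has area
at least `4c (log n)/n` is at most `n^{4 - 2c}`. -/
theorem stmt_9 (c : ℝ) (hc : 1 < c) :
    ∃ n₀ : ℕ, ∀ n : ℕ, n₀ ≤ n →
      (Measure.pi fun _ : Fin n => (volume : Measure T2))
          {ω : Fin n → T2 |
            ENNReal.ofReal (4 * c * Real.log n / n) ≤
              ⨆ i : Fin n, volume (vor (ω i) (Set.range ω))}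
        ≤ ENNReal.ofReal ((n : ℝ) ^ ((4 : ℝ) - 2 * c)) :=
  ⟨5, fun _ hn => stmt_9_general c hn⟩
end

section
/- Let C ⊆ ℝ² be an axis-aligned square of side length ℓ > 0, and for a point p ∈ C let D_p = {x ∈ C : dist(x,p) ≤ dist(x, ∂C)} be the set of points of C at least as close to p as to the boundary ∂C of C. If p is chosen uniformly at random from C, then Pr[area(D_p)/area(C) ≥ 1/15] ≥ 1/15. -/
/-!
Scale to `ℓ = 1` and let `p` have depth at least `2t` in `C`, that is, distance at least `2t` from
`∂C`. By the triangle inequality, every `x` in the disc of radius `t` around `p` satisfies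
`dist(x, ∂C) ≥ 2t - t ≥ dist(x, p)`, so `D_p` contains this disc, of area `π t²`. The points of
depth at least `2t` form a square of side `1 - 4t`. For `t = 3/20` the two areas are
`9π/400 > 27/400 > 1/15` and `(2/5)² = 4/25 > 1/15`.
-/

open MeasureTheory

/-- Euclidean distance on `ℝ × ℝ`. -/
noncomputable def distE (x y : ℝ × ℝ) : ℝ :=
  Real.sqrt ((x.1 - y.1) ^ 2 + (x.2 - y.2) ^ 2)

/-- The axis-aligned square with bottom-left corner `a` and side length `ℓ`. -/
def square (a : ℝ × ℝ) (ℓ : ℝ) : Set (ℝ × ℝ) :=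
  Set.Icc a.1 (a.1 + ℓ) ×ˢ Set.Icc a.2 (a.2 + ℓ)

/-- The Euclidean distance from a point to a set (used for the boundary `∂C`). -/
noncomputable def distBd (x : ℝ × ℝ) (S : Set (ℝ × ℝ)) : ℝ :=
  sInf (distE x '' S)

/-- `D_p`: the set of points of the square that are at least as close to `p` as to the
boundary of the square. -/
noncomputable def Dcell (a : ℝ × ℝ) (ℓ : ℝ) (p : ℝ × ℝ) : Set (ℝ × ℝ) :=
  {x ∈ square a ℓ | distE x p ≤ distBd x (frontier (square a ℓ))}

open WithLp Metric

lemma distE_eq_dist_toLp (x y : ℝ × ℝ) : distE x y = dist (toLp 2 x) (toLp 2 y) := by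
  simp [distE, prod_dist_eq_of_L2, Real.dist_eq, sq_abs]

lemma dist_le_distE (x y : ℝ × ℝ) : dist x y ≤ distE x y := by
  simpa [distE_eq_dist_toLp] using
    (prod_antilipschitzWith_toLp 2 ℝ ℝ).le_mul_dist x y

lemma distBd_eq_infDist (x : ℝ × ℝ) (S : Set (ℝ × ℝ)) :
    distBd x S = infDist (toLp 2 x) (toLp 2 '' S) := by
  rw [infDist_eq_iInf, ← sInf_image', Set.image_image, distBd]
  simp only [← distE_eq_dist_toLp]

lemma volume_setOf_distE_le (p : ℝ × ℝ) {r : ℝ} (hr : 0 ≤ r) :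
    volume {x | distE x p ≤ r} = ENNReal.ofReal (Real.pi * r ^ 2) := by
  have preimage_closedBall :
      {x | distE x p ≤ r} = toLp 2 ⁻¹' closedBall (toLp 2 p) r := by
    ext x
    simp only [Set.mem_ofPred_eq, Set.mem_preimage, mem_closedBall, distE_eq_dist_toLp]
  have finrank_eq_two : Module.finrank ℝ (WithLp 2 (ℝ × ℝ)) = 2 * 1 := by
    rw [(WithLp.linearEquiv 2 ℝ (ℝ × ℝ)).finrank_eq, Module.finrank_prod, Module.finrank_self]
  rw [preimage_closedBall,
    (WithLp.volume_preserving_toLp ℝ ℝ).measure_preimage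
      isClosed_closedBall.nullMeasurableSet,
    InnerProductSpace.volume_closedBall_of_dim_even finrank_eq_two, finrank_eq_two,
    ENNReal.ofReal_mul Real.pi_nonneg, ENNReal.ofReal_pow hr]
  simp [mul_comm]

lemma volume_closedBall_real_prod (c : ℝ × ℝ) {r : ℝ} (hr : 0 ≤ r) :
    volume (closedBall c r) = ENNReal.ofReal ((2 * r) ^ 2) := by
  rw [← closedBall_prod_same, Measure.volume_eq_prod, Measure.prod_prod, Real.volume_closedBall,
    Real.volume_closedBall, ← ENNReal.ofReal_mul (by positivity), sq]

lemma dist_le_infDist_of_two_mul_dist_le_infDist {X : Type*} [PseudoMetricSpace X] {p x : X}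
    {S : Set X} (h : 2 * dist x p ≤ infDist p S) : dist x p ≤ infDist x S := by
  have : infDist p S ≤ infDist x S + dist x p := by
    simpa only [dist_comm p x] using infDist_le_infDist_add_dist (s := S) (x := p) (y := x)
  linarith

section Square

variable {a p : ℝ × ℝ} {ℓ : ℝ}

/-- The centre of `square a ℓ`. Since the metric of `ℝ × ℝ` is the supremum metric, the square is
the closed ball of radius `ℓ / 2` around it, and the points of the square at distance at least `d`
from its boundary form the concentric ball of radius `ℓ / 2 - d`. -/
noncomputable def squareCenter (a : ℝ × ℝ) (ℓ : ℝ) : ℝ × ℝ :=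
  (a.1 + ℓ / 2, a.2 + ℓ / 2)

lemma square_eq_closedBall (a : ℝ × ℝ) (ℓ : ℝ) :
    square a ℓ = closedBall (squareCenter a ℓ) (ℓ / 2) := by
  rw [squareCenter, ← closedBall_prod_same, Real.closedBall_eq_Icc, Real.closedBall_eq_Icc, square]
  ring_nf

lemma frontier_square (a : ℝ × ℝ) (ℓ : ℝ) :
    frontier (square a ℓ) = sphere (squareCenter a ℓ) (ℓ / 2) := by
  rw [square_eq_closedBall, frontier_closedBall']

lemma volume_square (a : ℝ × ℝ) (hℓ : 0 ≤ ℓ) :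
    volume (square a ℓ) = ENNReal.ofReal (ℓ ^ 2) := by
  rw [square_eq_closedBall, volume_closedBall_real_prod _ (by positivity),
    mul_div_cancel₀ ℓ two_ne_zero]

lemma ofReal_le_div_volume_square (hℓ : 0 < ℓ) {k : ℝ} {m : ENNReal}
    (h : ENNReal.ofReal (k * ℓ ^ 2) ≤ m) : ENNReal.ofReal k ≤ m / volume (square a ℓ) := by
  have hsq : 0 < ENNReal.ofReal (ℓ ^ 2) := ENNReal.ofReal_pos.2 (by positivity)
  rwa [volume_square a hℓ.le, ENNReal.le_div_iff_mul_le (.inl hsq.ne') (.inl ENNReal.ofReal_ne_top),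
    ← ENNReal.ofReal_mul' (by positivity)]

lemma le_distBd_frontier_square (hℓ : 0 ≤ ℓ) {d : ℝ}
    (hp : p ∈ closedBall (squareCenter a ℓ) (ℓ / 2 - d)) :
    d ≤ distBd p (frontier (square a ℓ)) := by
  have frontier_nonempty : (frontier (square a ℓ)).Nonempty := by
    rw [frontier_square]
    exact NormedSpace.sphere_nonempty.2 (by positivity)
  rw [distBd]
  refine le_csInf (frontier_nonempty.image _) ?_
  rintro _ ⟨y, hy, rfl⟩
  rw [frontier_square, mem_sphere] at hy
  rw [mem_closedBall] at hp
  have := dist_triangle_left y (squareCenter a ℓ) p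
  linarith [dist_le_distE p y]

lemma setOf_distE_le_subset_Dcell {r : ℝ}
    (hp : p ∈ closedBall (squareCenter a ℓ) (ℓ / 2 - 2 * r)) :
    {x | distE x p ≤ r} ⊆ Dcell a ℓ p := by
  intro x (hx : distE x p ≤ r)
  have hr : 0 ≤ r := dist_nonneg.trans ((dist_le_distE x p).trans hx)
  have hℓ : 0 ≤ ℓ := by linarith [nonempty_closedBall.1 ⟨p, hp⟩]
  have hdepth := le_distBd_frontier_square hℓ hp
  constructor
  · rw [square_eq_closedBall, mem_closedBall]
    rw [mem_closedBall] at hp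
    linarith [dist_triangle x p (squareCenter a ℓ), dist_le_distE x p]
  · rw [distBd_eq_infDist] at hdepth ⊢
    rw [distE_eq_dist_toLp] at hx ⊢
    exact dist_le_infDist_of_two_mul_dist_le_infDist (by linarith)

lemma ofReal_le_volume_Dcell_div_volume_square (hℓ : 0 < ℓ) {t : ℝ} (ht : 0 ≤ t)
    (hp : p ∈ closedBall (squareCenter a ℓ) (ℓ / 2 - 2 * (t * ℓ))) :
    ENNReal.ofReal (Real.pi * t ^ 2) ≤ volume (Dcell a ℓ p) / volume (square a ℓ) := by
  apply ofReal_le_div_volume_square hℓ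
  calc ENNReal.ofReal (Real.pi * t ^ 2 * ℓ ^ 2)
      = volume {x | distE x p ≤ t * ℓ} := by
        rw [volume_setOf_distE_le p (by positivity), mul_pow, mul_assoc]
    _ ≤ volume (Dcell a ℓ p) :=
        measure_mono (setOf_distE_le_subset_Dcell hp)

theorem ofReal_le_volume_setOf_le_volume_Dcell (hℓ : 0 < ℓ) {t : ℝ} (ht : 0 ≤ t)
    (ht' : 4 * t ≤ 1) :
    ENNReal.ofReal ((1 - 4 * t) ^ 2) ≤
      volume {p ∈ square a ℓ |
          ENNReal.ofReal (Real.pi * t ^ 2) ≤ volume (Dcell a ℓ p) / volume (square a ℓ)}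
        / volume (square a ℓ) := by
  apply ofReal_le_div_volume_square hℓ
  have hradius : 0 ≤ ℓ / 2 - 2 * (t * ℓ) := by nlinarith
  calc ENNReal.ofReal ((1 - 4 * t) ^ 2 * ℓ ^ 2)
      = volume (closedBall (squareCenter a ℓ) (ℓ / 2 - 2 * (t * ℓ))) := by
        rw [volume_closedBall_real_prod _ hradius]
        ring_nf
    _ ≤ _ := by
        refine measure_mono fun p hp ↦ ⟨?_, ofReal_le_volume_Dcell_div_volume_square hℓ ht hp⟩
        rw [square_eq_closedBall]
        exact closedBall_subset_closedBall (by nlinarith) hp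

end Square

/-- For a point `p` chosen uniformly at random in an axis-aligned square `C` of side `ℓ > 0`,
with probability at least `1/15` the region `D_p` of points closer to `p` than to `∂C`
occupies at least a `1/15` fraction of the area of `C`. -/
theorem stmt_10 (a : ℝ × ℝ) (ℓ : ℝ) (hℓ : 0 < ℓ) :
    (1 : ENNReal) / 15 ≤
      volume {p ∈ square a ℓ |
          (1 : ENNReal) / 15 ≤ volume (Dcell a ℓ p) / volume (square a ℓ)}
        / volume (square a ℓ) := by
  have one_div_fifteen_le {k : ℝ} (hk : 1 / 15 ≤ k) : (1 : ENNReal) / 15 ≤ ENNReal.ofReal k := by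
    simpa [ENNReal.ofReal_inv_of_pos] using ENNReal.ofReal_le_ofReal hk
  have hdisc : (1 : ℝ) / 15 ≤ Real.pi * (3 / 20) ^ 2 := by linarith [Real.pi_gt_three]
  calc (1 : ENNReal) / 15
      ≤ ENNReal.ofReal ((1 - 4 * (3 / 20)) ^ 2) := one_div_fifteen_le (by norm_num)
    _ ≤ _ := ofReal_le_volume_setOf_le_volume_Dcell hℓ (by norm_num) (by norm_num)
    _ ≤ _ := by
        gcongr with p
        exact one_div_fifteen_le hdisc
end
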